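/- arXiv:1607.00342 — 5 statements merged into one kernel-verified Lean document; each statement's English description precedes it below -/
import Mathlib

section
/- Under the Cartan-problem hypotheses, the second necessary condition holds: for every x ∈ N and all indices i ∈ {1,…,n} and b, c ∈ {1,…,r}, one has Σ_j ( e^j_b ∂_j e^i_c − e^j_c ∂_j e^i_b ) = Σ_a C^a_{bc} e^i_a, where all functions on U and their partial derivatives are evaluated at the point φ(x). -/
/-- Partial derivative of a real-valued function on `ℝ^m` in the `i`-th coordinate
direction. -/
noncomputable def pd {m : ℕ} (f : (Fin m → ℝ) → ℝ) (i : Fin m) (x : Fin m → ℝ) : ℝ :=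
  fderiv ℝ f x (Pi.single i 1)

/-!
Write `X_a` for the vector field `e^i_a ∂_i` on the target, so that `dφ = e^a ⊗ X_a(φ)` near `x`.
Differentiating once more and antisymmetrizing kills the left-hand side, since the second derivative
of `φ` is symmetric. On the right the chain rule brings out the Lie brackets of the `X_a`:
`∑ a b, e^a(u) e^b(v) [X_a, X_b] = -∑ a, de^a(u, v) X_a`. On the vectors dual to the coframe the
structure equation turns this into `[X_b, X_c] = ∑ a, C^a_{bc} X_a`, whose `i`-th coordinate is the
claim.
-/

open Filter Topology VectorField

section NormedSpace

variable {𝕜 ι E F : Type*} [NontriviallyNormedField 𝕜] [IsRCLikeNormedField 𝕜] [Fintype ι]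
  [NormedAddCommGroup E] [NormedSpace 𝕜 E] [NormedAddCommGroup F] [NormedSpace 𝕜 F]
  {e : ι → E → E →L[𝕜] 𝕜} {X : ι → F → F} {φ : E → F} {x : E}

/-- The two sides are the second derivative of `φ` at `x`, evaluated on `(u, v)` and `(v, u)`. -/
lemma sum_smul_fderiv_add_sum_fderiv_smul_comm (he : ∀ a, DifferentiableAt 𝕜 (e a) x)
    (hX : ∀ a, DifferentiableAt 𝕜 (X a) (φ x))
    (hφ : ∀ᶠ y in 𝓝 x, HasFDerivAt φ (∑ a, (e a y).smulRight (X a (φ y))) y) (u v : E) :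
    ∑ a, ∑ b, (e a x u * e b x v) • fderiv 𝕜 (X b) (φ x) (X a (φ x))
        + ∑ a, fderiv 𝕜 (e a) x u v • X a (φ x)
      = ∑ a, ∑ b, (e a x v * e b x u) • fderiv 𝕜 (X b) (φ x) (X a (φ x))
        + ∑ a, fderiv 𝕜 (e a) x v u • X a (φ x) := by
  have hterm (a : ι) := (ContinuousLinearMap.smulRightL 𝕜 E F).hasFDerivAt_of_bilinear
    (he a).hasFDerivAt ((hX a).hasFDerivAt.comp x hφ.self_of_nhds)
  have hsymm := second_derivative_symmetric_of_eventually hφ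
    (HasFDerivAt.fun_sum fun a _ => hterm a) u v
  rw [Finset.sum_comm, Finset.sum_comm (f := fun a b => (e a x v * e b x u) • _)]
  simpa [Finset.sum_add_distrib, Finset.smul_sum, smul_smul, mul_comm] using hsymm

theorem sum_smul_lieBracket_eq_neg_sum_smul (he : ∀ a, DifferentiableAt 𝕜 (e a) x)
    (hX : ∀ a, DifferentiableAt 𝕜 (X a) (φ x))
    (hφ : ∀ᶠ y in 𝓝 x, HasFDerivAt φ (∑ a, (e a y).smulRight (X a (φ y))) y) (u v : E) :
    ∑ a, ∑ b, (e a x u * e b x v) • lieBracket 𝕜 (X a) (X b) (φ x)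
      = -∑ a, (fderiv 𝕜 (e a) x u v - fderiv 𝕜 (e a) x v u) • X a (φ x) := by
  have hswap : ∑ a, ∑ b, (e a x u * e b x v) • fderiv 𝕜 (X a) (φ x) (X b (φ x))
      = ∑ a, ∑ b, (e a x v * e b x u) • fderiv 𝕜 (X b) (φ x) (X a (φ x)) := by
    rw [Finset.sum_comm]
    simp only [mul_comm]
  simp only [lieBracket_eq, smul_sub, sub_smul, Finset.sum_sub_distrib]
  rw [hswap, neg_sub, sub_eq_sub_iff_add_eq_add,
    sum_smul_fderiv_add_sum_fderiv_smul_comm he hX hφ u v, add_comm]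

theorem lieBracket_eq_sum_smul_of_coframe {C : ι → ι → ι → 𝕜}
    (he : ∀ a, DifferentiableAt 𝕜 (e a) x)
    (he_surj : Function.Surjective fun u a => e a x u)
    (hX : ∀ a, DifferentiableAt 𝕜 (X a) (φ x))
    (hφ : ∀ᶠ y in 𝓝 x, HasFDerivAt φ (∑ a, (e a y).smulRight (X a (φ y))) y)
    (hC : ∀ a u v, fderiv 𝕜 (e a) x u v - fderiv 𝕜 (e a) x v u
      = -∑ b, ∑ c, C a b c * e b x u * e c x v) (b c : ι) :
    lieBracket 𝕜 (X b) (X c) (φ x) = ∑ a, C a b c • X a (φ x) := by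
  classical
  obtain ⟨u, hu⟩ := he_surj (Pi.single b 1)
  obtain ⟨v, hv⟩ := he_surj (Pi.single c 1)
  have hu_apply (a : ι) : e a x u = if a = b then 1 else 0 := by
    simpa only [Pi.single_apply] using congrFun hu a
  have hv_apply (a : ι) : e a x v = if a = c then 1 else 0 := by
    simpa only [Pi.single_apply] using congrFun hv a
  simpa [hC, hu_apply, hv_apply] using sum_smul_lieBracket_eq_neg_sum_smul he hX hφ u v

end NormedSpace

section Coordinates

variable {n : ℕ}

lemma fderiv_apply_eq_sum_mul_pd (f : (Fin n → ℝ) → ℝ) (y v : Fin n → ℝ) :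
    fderiv ℝ f y v = ∑ j, v j * pd f j y := by
  conv_lhs => rw [pi_eq_sum_univ' v]
  simp only [map_sum, map_smul, smul_eq_mul, pd]

lemma lieBracket_apply_eq_sum_pd {X Y : (Fin n → ℝ) → Fin n → ℝ} {y : Fin n → ℝ}
    (hX : DifferentiableAt ℝ X y) (hY : DifferentiableAt ℝ Y y) (i : Fin n) :
    lieBracket ℝ X Y y i
      = ∑ j, (X y j * pd (fun z => Y z i) j y - Y y j * pd (fun z => X z i) j y) := by
  rw [Finset.sum_sub_distrib, ← fderiv_apply_eq_sum_mul_pd, ← fderiv_apply_eq_sum_mul_pd,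
    fderiv_apply hX, fderiv_apply hY]
  rfl

theorem cartan_second_necessary_condition_general {E : Type*} [NormedAddCommGroup E]
    [NormedSpace ℝ E] {r : ℕ} {eA : Fin r → E → E →L[ℝ] ℝ} {φ : E → Fin n → ℝ}
    {C : Fin r → Fin r → Fin r → ℝ} {eI : Fin n → Fin r → (Fin n → ℝ) → ℝ} {x : E}
    (heA : ∀ a, DifferentiableAt ℝ (eA a) x)
    (heA_surj : Function.Surjective fun u a => eA a x u)
    (hφ : ∀ᶠ y in 𝓝 x, DifferentiableAt ℝ φ y)
    (heI : ∀ i a, DifferentiableAt ℝ (eI i a) (φ x))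
    (hMC : ∀ a u v, fderiv ℝ (eA a) x u v - fderiv ℝ (eA a) x v u
      = -∑ b, ∑ c, C a b c * eA b x u * eA c x v)
    (hdφ : ∀ᶠ y in 𝓝 x, ∀ i u, fderiv ℝ (fun z => φ z i) y u = ∑ a, eI i a (φ y) * eA a y u)
    (i : Fin n) (b c : Fin r) :
    ∑ j, (eI j b (φ x) * pd (eI i c) j (φ x) - eI j c (φ x) * pd (eI i b) j (φ x))
      = ∑ a, C a b c * eI i a (φ x) := by
  let X (a : Fin r) (y : Fin n → ℝ) : Fin n → ℝ := fun j => eI j a y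
  have hX (a : Fin r) : DifferentiableAt ℝ (X a) (φ x) := differentiableAt_pi.2 fun j => heI j a
  have hdφX : ∀ᶠ y in 𝓝 x, HasFDerivAt φ (∑ a, (eA a y).smulRight (X a (φ y))) y := by
    filter_upwards [hφ, hdφ] with y hφy hdφy
    convert hφy.hasFDerivAt using 1
    ext u j
    have hcoord : fderiv ℝ φ y u j = fderiv ℝ (fun z => φ z j) y u := by
      rw [fderiv_apply hφy]
      rfl
    simp [hcoord, hdφy, X, mul_comm]
  have hbracket : lieBracket ℝ (X b) (X c) (φ x) = ∑ a, C a b c • X a (φ x) :=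
    lieBracket_eq_sum_smul_of_coframe heA heA_surj hX hdφX hMC b c
  calc _ = lieBracket ℝ (X b) (X c) (φ x) i := (lieBracket_apply_eq_sum_pd (hX b) (hX c) i).symm
    _ = ∑ a, C a b c * eI i a (φ x) := by simp [hbracket, X]

end Coordinates

/-- **Cartan problem, second necessary condition.**
Given a coframe `e^a` on an open set `N ⊆ ℝ^r`, a smooth map `φ : N → U ⊆ ℝ^n`, and
smooth functions `C^a_{bc}`, `e^i_a` on `U` with `C^a_{bc} = −C^a_{cb}`, such that
`de^a = −(1/2) C^a_{bc}(φ) e^b ∧ e^c` and `dφ^i = e^i_a(φ) e^a`, one has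
`Σ_j ( e^j_b ∂_j e^i_c − e^j_c ∂_j e^i_b ) = Σ_a C^a_{bc} e^i_a` evaluated at `φ(x)`,
for every `x ∈ N`. -/
theorem cartan_second_necessary_condition {r n : ℕ}
    (N : Set (Fin r → ℝ)) (hN : IsOpen N)
    (U : Set (Fin n → ℝ)) (hU : IsOpen U)
    (eA : Fin r → (Fin r → ℝ) → ((Fin r → ℝ) →L[ℝ] ℝ))
    (heA_smooth : ∀ a, ContDiffOn ℝ (⊤ : ℕ∞) (eA a) N)
    (hcoframe : ∀ x ∈ N, Function.Bijective (fun u : Fin r → ℝ => (fun a => eA a x u)))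
    (φ : (Fin r → ℝ) → (Fin n → ℝ))
    (hφ_smooth : ContDiffOn ℝ (⊤ : ℕ∞) φ N)
    (hφU : ∀ x ∈ N, φ x ∈ U)
    (C : Fin r → Fin r → Fin r → (Fin n → ℝ) → ℝ)
    (hC_smooth : ∀ a b c, ContDiffOn ℝ (⊤ : ℕ∞) (C a b c) U)
    (hC_anti : ∀ a b c, ∀ y ∈ U, C a b c y = - C a c b y)
    (eI : Fin n → Fin r → (Fin n → ℝ) → ℝ)
    (heI_smooth : ∀ i a, ContDiffOn ℝ (⊤ : ℕ∞) (eI i a) U)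
    (hMC : ∀ x ∈ N, ∀ (a : Fin r) (u v : Fin r → ℝ),
      fderiv ℝ (eA a) x u v - fderiv ℝ (eA a) x v u
        = - ∑ b, ∑ c, C a b c (φ x) * (eA b x u) * (eA c x v))
    (hdφ : ∀ x ∈ N, ∀ (i : Fin n) (u : Fin r → ℝ),
      fderiv ℝ (fun y => φ y i) x u = ∑ a, eI i a (φ x) * (eA a x u)) :
    ∀ x ∈ N, ∀ (i : Fin n) (b c : Fin r),
      (∑ j, (eI j b (φ x) * pd (eI i c) j (φ x) - eI j c (φ x) * pd (eI i b) j (φ x)))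
        = ∑ a, C a b c (φ x) * eI i a (φ x) := by
  intro x hx
  have hN_nhds : N ∈ 𝓝 x := hN.mem_nhds hx
  have hU_nhds : U ∈ 𝓝 (φ x) := hU.mem_nhds (hφU x hx)
  exact cartan_second_necessary_condition_general
    (fun a => ((heA_smooth a).differentiableOn (by simp)).differentiableAt hN_nhds)
    (hcoframe x hx).surjective
    ((hφ_smooth.differentiableOn (by simp)).eventually_differentiableAt hN_nhds)
    (fun i a => ((heI_smooth i a).differentiableOn (by simp)).differentiableAt hU_nhds)
    (hMC x hx) (mem_of_superset hN_nhds hdφ)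
end

section
/- Under the Cartan-problem hypotheses, the first necessary condition holds: for every x ∈ N and all indices a, b, c, d ∈ {1,…,r}, the cyclic sum over the triple (b,c,d) of [ Σ_e C^a_{eb} C^e_{cd} − Σ_i e^i_b ∂_i C^a_{cd} ] vanishes, where all functions on U and their partial derivatives are evaluated at the point φ(x). (This is the Jacobi-type identity C^a_{e[b}C^e_{cd]} = e^i_{[b}∂_i C^a_{cd]}.) -/
/-!
The identity is `d² = 0` for the coframe. Write the structure equations as
`dθ^a = -K^a_{bc} θ^b ⊗ θ^c` with `K = C ∘ φ`; antisymmetry of `dθ^a` forces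
`K^a_{bc} = -K^a_{cb}`. Differentiate them at `x` along constant vectors `e_b` dual to the coframe
at `x` and sum cyclically: the left-hand side vanishes because second derivatives are symmetric. On
the right-hand side, the derivatives of `K` give `dK^a_{cd}(e_b)`, while those of the coframe pair
up, by the antisymmetry of `K`, into values of `dθ^p`, which the structure equations turn into
`K^a_{pb} K^p_{cd}`. Finally `dφ = θ^b ⊗ X_b` and the chain rule identify `dK^a_{cd}(e_b)` with the
derivative of `C^a_{cd}` along `X_b`.
-/

open scoped Topology

section ExteriorDerivative

variable {𝕜 E F : Type*} [NontriviallyNormedField 𝕜] [NormedAddCommGroup E] [NormedSpace 𝕜 E]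
  [NormedAddCommGroup F] [NormedSpace 𝕜 F] {α : E → E →L[𝕜] F} {x : E}

/-- The exterior derivative `dα(u, v) = Dα(u)(v) - Dα(v)(u)` of a vector-valued 1-form at `x`, as a
function of two vectors. -/
noncomputable def extDerivOneForm (α : E → E →L[𝕜] F) (x u v : E) : F :=
  fderiv 𝕜 α x u v - fderiv 𝕜 α x v u

theorem extDerivOneForm_swap (u v : E) : extDerivOneForm α x u v = -extDerivOneForm α x v u :=
  (neg_sub _ _).symm

theorem fderiv_oneForm_apply (hα : DifferentiableAt 𝕜 α x) (u v : E) :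
    fderiv 𝕜 (fun y => α y v) x u = fderiv 𝕜 α x u v := by
  simp [fderiv_clm_apply hα (differentiableAt_const v)]

theorem fderiv_extDerivOneForm (hα : DifferentiableAt 𝕜 (fderiv 𝕜 α) x) (u v w : E) :
    fderiv 𝕜 (fun y => extDerivOneForm α y v w) x u
      = fderiv 𝕜 (fderiv 𝕜 α) x u v w - fderiv 𝕜 (fderiv 𝕜 α) x u w v := by
  have eval_diff (s : E) : DifferentiableAt 𝕜 (fun y => fderiv 𝕜 α y s) x :=
    hα.clm_apply (differentiableAt_const s)
  have second_deriv (s t : E) :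
      fderiv 𝕜 (fun y => fderiv 𝕜 α y s t) x u = fderiv 𝕜 (fderiv 𝕜 α) x u s t := by
    rw [fderiv_oneForm_apply (eval_diff s), fderiv_oneForm_apply hα]
  simp only [extDerivOneForm]
  rw [fderiv_fun_sub ((eval_diff v).clm_apply (differentiableAt_const w))
    ((eval_diff w).clm_apply (differentiableAt_const v)), sub_apply, second_deriv, second_deriv]

theorem cyclic_sum_fderiv_extDerivOneForm (hα : DifferentiableAt 𝕜 (fderiv 𝕜 α) x)
    (hsymm : IsSymmSndFDerivAt 𝕜 α x) (u v w : E) :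
    fderiv 𝕜 (fun y => extDerivOneForm α y v w) x u
      + fderiv 𝕜 (fun y => extDerivOneForm α y w u) x v
      + fderiv 𝕜 (fun y => extDerivOneForm α y u v) x w = 0 := by
  simp only [fderiv_extDerivOneForm hα]
  rw [hsymm.eq v u, hsymm.eq w u, hsymm.eq w v]
  abel

end ExteriorDerivative

section StructureEquations

variable {𝕜 E ι : Type*} [NontriviallyNormedField 𝕜] [NormedAddCommGroup E] [NormedSpace 𝕜 E]

/-- The structure equations `dθ^a = -∑ K^a_{bc} θ^b ⊗ θ^c` at the point `x`, for a family `θ` of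
1-forms with structure functions `K`. For antisymmetric `K` the right-hand side is
`-(1/2) K^a_{bc} θ^b ∧ θ^c`. -/
def StructureEquationsAt [Fintype ι] (θ : ι → E → E →L[𝕜] 𝕜) (K : ι → ι → ι → E → 𝕜) (x : E) :
    Prop :=
  ∀ a u v, extDerivOneForm (θ a) x u v = -∑ b, ∑ c, K a b c x * θ b x u * θ c x v

variable {θ : ι → E → E →L[𝕜] 𝕜} {x : E}

theorem exists_dual_frame [DecidableEq ι] (hθ : Function.Surjective fun u a => θ a x u) :
    ∃ e : ι → E, ∀ a b, θ a x (e b) = if a = b then 1 else 0 := by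
  choose e he using fun b => hθ fun a => if a = b then 1 else 0
  exact ⟨e, fun a b => congrFun (he b) a⟩

theorem fderiv_sum_mul_oneForm_apply [Fintype ι] {k : ι → ι → E → 𝕜}
    (hθ : ∀ b, DifferentiableAt 𝕜 (θ b) x) (hk : ∀ b c, DifferentiableAt 𝕜 (k b c) x)
    (u v w : E) :
    fderiv 𝕜 (fun y => ∑ b, ∑ c, k b c y * θ b y v * θ c y w) x u
      = ∑ b, ∑ c, (fderiv 𝕜 (k b c) x u * θ b x v * θ c x w
        + k b c x * fderiv 𝕜 (θ b) x u v * θ c x w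
        + k b c x * θ b x v * fderiv 𝕜 (θ c) x u w) := by
  have eval_diff (b : ι) (s : E) : DifferentiableAt 𝕜 (fun y => θ b y s) x :=
    (hθ b).clm_apply (differentiableAt_const s)
  have leibniz := HasFDerivAt.fun_sum (u := Finset.univ) fun b _ =>
    HasFDerivAt.fun_sum (u := Finset.univ) fun c _ =>
      ((hk b c).hasFDerivAt.fun_mul (eval_diff b v).hasFDerivAt).fun_mul
        (eval_diff c w).hasFDerivAt
  simp only [leibniz.fderiv, sum_apply, add_apply, smul_apply, smul_eq_mul,
    fderiv_oneForm_apply (hθ _)]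
  refine Finset.sum_congr rfl fun b _ => Finset.sum_congr rfl fun c _ => ?_
  ring

variable [Fintype ι] [DecidableEq ι] {K : ι → ι → ι → E → 𝕜} {e : ι → E}

theorem StructureEquationsAt.extDerivOneForm_dual (hK : StructureEquationsAt θ K x)
    (he : ∀ a b, θ a x (e b) = if a = b then 1 else 0) (a b c : ι) :
    extDerivOneForm (θ a) x (e b) (e c) = -K a b c x := by
  simp [hK a, he]

theorem StructureEquationsAt.antisymm (hK : StructureEquationsAt θ K x)
    (he : ∀ a b, θ a x (e b) = if a = b then 1 else 0) (a b c : ι) :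
    K a b c x = -K a c b x := by
  rw [← hK.extDerivOneForm_dual he, extDerivOneForm_swap, hK.extDerivOneForm_dual he, neg_neg]

theorem fderiv_sum_mul_oneForm_dual {k : ι → ι → E → 𝕜} (hθ : ∀ b, DifferentiableAt 𝕜 (θ b) x)
    (hk : ∀ b c, DifferentiableAt 𝕜 (k b c) x)
    (he : ∀ a b, θ a x (e b) = if a = b then 1 else 0) (u : E) (c d : ι) :
    fderiv 𝕜 (fun y => ∑ p, ∑ q, k p q y * θ p y (e c) * θ q y (e d)) x u
      = fderiv 𝕜 (k c d) x u + ∑ p, k p d x * fderiv 𝕜 (θ p) x u (e c)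
        + ∑ p, k c p x * fderiv 𝕜 (θ p) x u (e d) := by
  rw [fderiv_sum_mul_oneForm_apply hθ hk]
  simp [he, Finset.sum_add_distrib]

theorem StructureEquationsAt.sum_mul_fderiv_dual (hK : StructureEquationsAt θ K x)
    (he : ∀ a b, θ a x (e b) = if a = b then 1 else 0) (a b c d : ι) :
    ∑ p, K a p d x * fderiv 𝕜 (θ p) x (e b) (e c) + ∑ p, K a d p x * fderiv 𝕜 (θ p) x (e c) (e b)
      = -∑ p, K a p d x * K p b c x := by
  simp only [← Finset.sum_add_distrib, ← Finset.sum_neg_distrib]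
  refine Finset.sum_congr rfl fun p _ => ?_
  have dθ_dual : fderiv 𝕜 (θ p) x (e b) (e c) - fderiv 𝕜 (θ p) x (e c) (e b) = -K p b c x :=
    hK.extDerivOneForm_dual he p b c
  rw [hK.antisymm he a d p]
  linear_combination K a p d x * dθ_dual

theorem jacobi_of_structureEquationsAt (hK : ∀ᶠ y in 𝓝 x, StructureEquationsAt θ K y)
    (hθ : ∀ a, ContDiffAt 𝕜 (minSmoothness 𝕜 2) (θ a) x)
    (hK_diff : ∀ a b c, DifferentiableAt 𝕜 (K a b c) x)
    (he : ∀ a b, θ a x (e b) = if a = b then 1 else 0) (a b c d : ι) :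
    (∑ p, K a p b x * K p c d x - fderiv 𝕜 (K a c d) x (e b))
      + (∑ p, K a p c x * K p d b x - fderiv 𝕜 (K a d b) x (e c))
      + (∑ p, K a p d x * K p b c x - fderiv 𝕜 (K a b c) x (e d)) = 0 := by
  have hθ_two (p : ι) : ContDiffAt 𝕜 2 (θ p) x := (hθ p).of_le le_minSmoothness
  have hθ_diff (p : ι) : DifferentiableAt 𝕜 (θ p) x := (hθ_two p).differentiableAt two_ne_zero
  have hdθ_diff : DifferentiableAt 𝕜 (fderiv 𝕜 (θ a)) x :=
    ((hθ_two a).fderiv_right (m := 1) one_add_one_eq_two.le).differentiableAt one_ne_zero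
  have fderiv_structure (p q s : ι) :
      fderiv 𝕜 (fun y => extDerivOneForm (θ a) y (e q) (e s)) x (e p)
        = -(fderiv 𝕜 (K a q s) x (e p) + ∑ t, K a t s x * fderiv 𝕜 (θ t) x (e p) (e q)
          + ∑ t, K a q t x * fderiv 𝕜 (θ t) x (e p) (e s)) := by
    rw [Filter.EventuallyEq.fderiv_eq (hK.mono fun y hy => hy a (e q) (e s)), fderiv_fun_neg,
      neg_apply, fderiv_sum_mul_oneForm_dual hθ_diff (hK_diff a) he]
  have closed := cyclic_sum_fderiv_extDerivOneForm hdθ_diff ((hθ a).isSymmSndFDerivAt le_rfl)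
    (e b) (e c) (e d)
  simp only [fderiv_structure] at closed
  have pairing := hK.self_of_nhds.sum_mul_fderiv_dual he a
  linear_combination closed + pairing b c d + pairing c d b + pairing d b c

end StructureEquations

theorem cartan_first_necessary_condition_general {𝕜 E F ι : Type*} [NontriviallyNormedField 𝕜]
    [NormedAddCommGroup E] [NormedSpace 𝕜 E] [NormedAddCommGroup F] [NormedSpace 𝕜 F] [Fintype ι]
    {θ : ι → E → E →L[𝕜] 𝕜} {C : ι → ι → ι → F → 𝕜} {X : ι → F → F} {φ : E → F} {x : E}
    (hθ : ∀ a, ContDiffAt 𝕜 (minSmoothness 𝕜 2) (θ a) x)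
    (hθ_surj : Function.Surjective fun u a => θ a x u)
    (hC : ∀ a b c, DifferentiableAt 𝕜 (C a b c) (φ x))
    (hdθ : ∀ᶠ y in 𝓝 x, StructureEquationsAt θ (fun a b c y => C a b c (φ y)) y)
    (hdφ : HasFDerivAt φ (∑ a, (θ a x).smulRight (X a (φ x))) x) (a b c d : ι) :
    (∑ p, C a p b (φ x) * C p c d (φ x) - fderiv 𝕜 (C a c d) (φ x) (X b (φ x)))
      + (∑ p, C a p c (φ x) * C p d b (φ x) - fderiv 𝕜 (C a d b) (φ x) (X c (φ x)))
      + (∑ p, C a p d (φ x) * C p b c (φ x) - fderiv 𝕜 (C a b c) (φ x) (X d (φ x))) = 0 := by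
  classical
  obtain ⟨e, he⟩ := exists_dual_frame hθ_surj
  have chain (p q s : ι) :
      fderiv 𝕜 (fun y => C a q s (φ y)) x (e p) = fderiv 𝕜 (C a q s) (φ x) (X p (φ x)) := by
    have hcomp := (hC a q s).hasFDerivAt.comp x hdφ
    refine (congrArg (fun L => L (e p)) hcomp.fderiv).trans ?_
    simp [he]
  simpa only [chain] using jacobi_of_structureEquationsAt hdθ hθ
    (fun a b c => (hC a b c).comp x hdφ.differentiableAt) he a b c d

theorem fderiv_eq_sum_mul_pd {m : ℕ} (f : (Fin m → ℝ) → ℝ) (y v : Fin m → ℝ) :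
    fderiv ℝ f y v = ∑ i, v i * pd f i y := by
  conv_lhs => rw [pi_eq_sum_univ' v]
  simp only [map_sum, map_smul, smul_eq_mul, pd]

/-- **Cartan problem, first necessary condition.**
Given a coframe `e^a` on an open set `N ⊆ ℝ^r`, a smooth map `φ : N → U ⊆ ℝ^n`, and
smooth functions `C^a_{bc}`, `e^i_a` on `U` with `C^a_{bc} = −C^a_{cb}`, such that
`de^a = −(1/2) C^a_{bc}(φ) e^b ∧ e^c` and `dφ^i = e^i_a(φ) e^a`, the Jacobi-type
identity `C^a_{e[b}C^e_{cd]} = e^i_{[b}∂_i C^a_{cd]}` holds: the cyclic sum over `(b,c,d)`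
of `Σ_e C^a_{eb} C^e_{cd} − Σ_i e^i_b ∂_i C^a_{cd}` vanishes, evaluated at `φ(x)`, for
every `x ∈ N`. -/
theorem cartan_first_necessary_condition {r n : ℕ}
    (N : Set (Fin r → ℝ)) (hN : IsOpen N)
    (U : Set (Fin n → ℝ)) (hU : IsOpen U)
    (eA : Fin r → (Fin r → ℝ) → ((Fin r → ℝ) →L[ℝ] ℝ))
    (heA_smooth : ∀ a, ContDiffOn ℝ (⊤ : ℕ∞) (eA a) N)
    (hcoframe : ∀ x ∈ N, Function.Bijective (fun u : Fin r → ℝ => (fun a => eA a x u)))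
    (φ : (Fin r → ℝ) → (Fin n → ℝ))
    (hφ_smooth : ContDiffOn ℝ (⊤ : ℕ∞) φ N)
    (hφU : ∀ x ∈ N, φ x ∈ U)
    (C : Fin r → Fin r → Fin r → (Fin n → ℝ) → ℝ)
    (hC_smooth : ∀ a b c, ContDiffOn ℝ (⊤ : ℕ∞) (C a b c) U)
    (hC_anti : ∀ a b c, ∀ y ∈ U, C a b c y = - C a c b y)
    (eI : Fin n → Fin r → (Fin n → ℝ) → ℝ)
    (heI_smooth : ∀ i a, ContDiffOn ℝ (⊤ : ℕ∞) (eI i a) U)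
    (hMC : ∀ x ∈ N, ∀ (a : Fin r) (u v : Fin r → ℝ),
      fderiv ℝ (eA a) x u v - fderiv ℝ (eA a) x v u
        = - ∑ b, ∑ c, C a b c (φ x) * (eA b x u) * (eA c x v))
    (hdφ : ∀ x ∈ N, ∀ (i : Fin n) (u : Fin r → ℝ),
      fderiv ℝ (fun y => φ y i) x u = ∑ a, eI i a (φ x) * (eA a x u)) :
    ∀ x ∈ N, ∀ (a b c d : Fin r),
      ((∑ e, C a e b (φ x) * C e c d (φ x)) - ∑ i, eI i b (φ x) * pd (C a c d) i (φ x))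
        + ((∑ e, C a e c (φ x) * C e d b (φ x)) - ∑ i, eI i c (φ x) * pd (C a d b) i (φ x))
        + ((∑ e, C a e d (φ x) * C e b c (φ x)) - ∑ i, eI i d (φ x) * pd (C a b c) i (φ x))
        = 0 := by
  intro x hx a b c d
  have hN_nhds : N ∈ 𝓝 x := hN.mem_nhds hx
  have hdφ_x : HasFDerivAt φ (∑ a, (eA a x).smulRight fun i => eI i a (φ x)) x := by
    have hφ := (hφ_smooth.contDiffAt hN_nhds).differentiableAt (by simp)
    refine hφ.hasFDerivAt.congr_fderiv ?_
    ext u i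
    simpa [fderiv_apply hφ, mul_comm] using hdφ x hx i u
  simpa only [fderiv_eq_sum_mul_pd] using cartan_first_necessary_condition_general
    (X := fun a y i => eI i a y)
    (fun a => ((heA_smooth a).contDiffAt hN_nhds).of_le (by simpa using ENat.LEInfty.out))
    (hcoframe x hx).surjective
    (fun a b c =>
      ((hC_smooth a b c).contDiffAt (hU.mem_nhds (hφU x hx))).differentiableAt (by simp))
    (Filter.mem_of_superset hN_nhds hMC) hdφ_x a b c d
end

section
/- Let O : V → V be an orthogonal linear map (⟨Ox, Oy⟩ = ⟨x, y⟩ for all x, y ∈ V) and let b : V → V be a self-adjoint linear map that is either positive definite (⟨bx, x⟩ > 0 for all x ≠ 0) or negative definite (⟨bx, x⟩ < 0 for all x ≠ 0). Then the linear map (id − O) + b ∘ (id + O) is invertible. -/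
/-!
Let `B` be a symmetric bilinear form preserved by `O`. Then `x - O x` and `x + O x` are
`B`-orthogonal, as `B (x - O x) (x + O x) = B x x - B (O x) (O x)`. If
`(x - O x) + b (x + O x) = 0`, pairing with `x + O x` therefore leaves
`B (b (x + O x)) (x + O x) = 0`. When `y ↦ B (b y) y` is anisotropic, this forces `x + O x = 0`,
so also `x - O x = 0` and `2 x = 0`.
-/

open scoped RealInnerProductSpace

theorem disjoint_ker_id_sub_ker_id_add {R M : Type*} [Ring R] [AddCommGroup M] [Module R M]
    (h2 : IsSMulRegular M (2 : R)) (f : M →ₗ[R] M) :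
    Disjoint (LinearMap.id - f).ker (LinearMap.id + f).ker := by
  refine Submodule.disjoint_def.2 fun x (hsub : x - f x = 0) (hadd : x + f x = 0) =>
    h2.right_eq_zero_of_smul ?_
  calc (2 : R) • x = (x - f x) + (x + f x) := by rw [two_smul]; abel
    _ = 0 := by rw [hsub, hadd, add_zero]

section BilinForm

variable {R M N : Type*} [CommRing R] [AddCommGroup M] [Module R M] [AddCommGroup N] [Module R N]

theorem bilinForm_sub_add_of_isSymm {B : LinearMap.BilinForm R M} (hB : B.IsSymm) (x y : M) :
    B (x - y) (x + y) = B x x - B y y := by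
  simp only [map_sub, map_add, LinearMap.sub_apply, hB.eq y x]
  abel

theorem injective_add_comp_of_bilinForm_eq_zero {B : LinearMap.BilinForm R N} {b : N →ₗ[R] N}
    (hb : ∀ y, y ≠ 0 → B (b y) y ≠ 0) {f g : M →ₗ[R] N} (hfg : ∀ x, B (f x) (g x) = 0)
    (hker : Disjoint f.ker g.ker) : Function.Injective (f + b ∘ₗ g) := by
  refine (injective_iff_map_eq_zero _).2 fun x (hx : f x + b (g x) = 0) => ?_
  have hquad : B (b (g x)) (g x) = 0 :=
    calc B (b (g x)) (g x) = B (f x + b (g x)) (g x) := by simp [hfg]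
      _ = 0 := by simp [hx]
  have hg : g x = 0 := not_imp_not.1 (hb (g x)) hquad
  have hf : f x = 0 := by simpa [hg] using hx
  exact Submodule.disjoint_def.1 hker x hf hg

theorem invertible_id_sub_O_add_b_comp_id_add_O_general [IsArtinian R M]
    (h2 : IsSMulRegular M (2 : R)) {B : LinearMap.BilinForm R M} (hB : B.IsSymm) (O b : M →ₗ[R] M)
    (hO : ∀ x, B (O x) (O x) = B x x) (hb : ∀ x, x ≠ 0 → B (b x) x ≠ 0) :
    Function.Bijective
      ⇑(((LinearMap.id : M →ₗ[R] M) - O) + b ∘ₗ ((LinearMap.id : M →ₗ[R] M) + O)) := by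
  have horth (x : M) : B (x - O x) (x + O x) = 0 :=
    calc B (x - O x) (x + O x) = B x x - B (O x) (O x) := bilinForm_sub_add_of_isSymm hB x (O x)
      _ = 0 := by rw [hO, sub_self]
  exact IsArtinian.bijective_of_injective_endomorphism _ <|
    injective_add_comp_of_bilinForm_eq_zero hb horth (disjoint_ker_id_sub_ker_id_add h2 O)

end BilinForm

/-- Let `V` be a finite-dimensional real inner product space, `O : V → V` an orthogonal
linear map, and `b : V → V` a self-adjoint linear map which is positive definite or
negative definite. Then the linear map `(id − O) + b ∘ (id + O)` is invertible. -/
theorem invertible_id_sub_O_add_b_comp_id_add_O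
    {V : Type*} [NormedAddCommGroup V] [InnerProductSpace ℝ V] [FiniteDimensional ℝ V]
    (O b : V →ₗ[ℝ] V)
    (hO : ∀ x y : V, ⟪O x, O y⟫ = ⟪x, y⟫)
    (hb_selfadjoint : ∀ x y : V, ⟪b x, y⟫ = ⟪x, b y⟫)
    (hb_definite : (∀ x : V, x ≠ 0 → 0 < ⟪b x, x⟫) ∨ (∀ x : V, x ≠ 0 → ⟪b x, x⟫ < 0)) :
    Function.Bijective ⇑(((LinearMap.id : V →ₗ[ℝ] V) - O) + b ∘ₗ ((LinearMap.id : V →ₗ[ℝ] V) + O)) := by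
  have hb (x : V) (hx : x ≠ 0) : ⟪b x, x⟫ ≠ 0 :=
    hb_definite.elim (fun hpos => (hpos x hx).ne') (fun hneg => (hneg x hx).ne)
  exact invertible_id_sub_O_add_b_comp_id_add_O_general (.of_ne_zero (two_ne_zero (α := ℝ)))
    (LinearMap.BilinForm.isSymm_iff.2 isSymm_inner) O b (fun x => hO x x) hb
end

section
/- The matrices g⁻¹ + π, g⁻¹ − π, and g⁻¹ − π g π are all invertible, and the following identity holds: (g⁻¹ + π)⁻¹ · g⁻¹ · (g⁻¹ − π)⁻¹ = (g⁻¹ − π g π)⁻¹. -/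
/-!
Adding its conjugate transpose to `g⁻¹ ± π` cancels `±π` and leaves the positive definite matrix
`g⁻¹ + g⁻¹`; a matrix `M` with `M + Mᴴ` positive definite has trivial kernel, because `M v = 0`
forces `v* (M + Mᴴ) v = 0`. So `g⁻¹ ± π` are invertible, and the remaining claims follow by
inverting the factorization `g⁻¹ - π g π = (g⁻¹ - π) g (g⁻¹ + π)`.
-/

open Matrix

theorem inv_sub_mul_mul_eq_sub_mul_mul_add {R : Type*} [Ring R] (u : Rˣ) (b : R) :
    ↑u⁻¹ - b * u * b = (↑u⁻¹ - b) * u * (↑u⁻¹ + b) := by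
  calc
    ↑u⁻¹ - b * u * b = (1 - b * u) * (↑u⁻¹ + b) := by
      simp only [sub_mul, mul_add, one_mul, Units.mul_inv_cancel_right]
      abel
    _ = (↑u⁻¹ - b) * u * (↑u⁻¹ + b) := by rw [sub_mul (↑u⁻¹ : R), Units.inv_mul]

section Field

variable {n K : Type*} [Fintype n] [DecidableEq n] [Field K] [PartialOrder K] [StarRing K]

theorem isUnit_of_posDef_add_conjTranspose {M : Matrix n n K} (hM : (M + Mᴴ).PosDef) :
    IsUnit M := by
  rw [isUnit_iff_isUnit_det, isUnit_iff_ne_zero]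
  intro hdet
  obtain ⟨v, hv, hMv⟩ := exists_mulVec_eq_zero_iff.mpr hdet
  have hform : star v ⬝ᵥ ((M + Mᴴ) *ᵥ v) = 0 := by
    rw [add_mulVec, dotProduct_add, dotProduct_mulVec _ Mᴴ, ← star_mulVec, hMv,
      dotProduct_zero, star_zero, zero_dotProduct, add_zero]
  exact (hM.dotProduct_mulVec_pos hv).ne' hform

variable [AddLeftMono K]

theorem isUnit_add_of_posDef_of_mem_skewAdjoint {A B : Matrix n n K} (hA : A.PosDef)
    (hB : B ∈ skewAdjoint (Matrix n n K)) : IsUnit (A + B) := by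
  apply isUnit_of_posDef_add_conjTranspose
  have hB' : Bᴴ = -B := skewAdjoint.mem_iff.mp hB
  have hsum : A + B + (A + B)ᴴ = A + A := by
    rw [conjTranspose_add, hA.isHermitian.eq, hB']
    abel
  exact hsum ▸ hA.add hA

theorem inv_ginv_add_pi_mul_ginv_mul_inv_ginv_sub_pi_general {g π : Matrix n n K}
    (hg : g.PosDef) (hπ : π ∈ skewAdjoint (Matrix n n K)) :
    IsUnit (g⁻¹ + π) ∧ IsUnit (g⁻¹ - π) ∧ IsUnit (g⁻¹ - π * g * π) ∧
      (g⁻¹ + π)⁻¹ * g⁻¹ * (g⁻¹ - π)⁻¹ = (g⁻¹ - π * g * π)⁻¹ := by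
  have hadd : IsUnit (g⁻¹ + π) := isUnit_add_of_posDef_of_mem_skewAdjoint hg.inv hπ
  have hsub : IsUnit (g⁻¹ - π) := by
    simpa only [sub_eq_add_neg] using
      isUnit_add_of_posDef_of_mem_skewAdjoint hg.inv (neg_mem hπ)
  have hfactor : g⁻¹ - π * g * π = (g⁻¹ - π) * g * (g⁻¹ + π) := by
    simpa only [coe_units_inv, IsUnit.unit_spec] using
      inv_sub_mul_mul_eq_sub_mul_mul_add hg.isUnit.unit π
  rw [hfactor]
  refine ⟨hadd, hsub, (hsub.mul hg.isUnit).mul hadd, ?_⟩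
  rw [Matrix.mul_inv_rev, Matrix.mul_inv_rev, mul_assoc]

end Field

/-- Let `g` be a real symmetric positive-definite `n×n` matrix and `π` a real
antisymmetric `n×n` matrix. Then `g⁻¹ + π`, `g⁻¹ − π` and `g⁻¹ − π g π` are invertible,
and `(g⁻¹ + π)⁻¹ · g⁻¹ · (g⁻¹ − π)⁻¹ = (g⁻¹ − π g π)⁻¹`. -/
theorem inv_ginv_add_pi_mul_ginv_mul_inv_ginv_sub_pi {n : ℕ} (hn : 1 ≤ n)
    (g π : Matrix (Fin n) (Fin n) ℝ)
    (hg : g.PosDef) (hπ : π.transpose = -π) :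
    IsUnit (g⁻¹ + π) ∧ IsUnit (g⁻¹ - π) ∧ IsUnit (g⁻¹ - π * g * π) ∧
      (g⁻¹ + π)⁻¹ * g⁻¹ * (g⁻¹ - π)⁻¹ = (g⁻¹ - π * g * π)⁻¹ := by
  exact inv_ginv_add_pi_mul_ginv_mul_inv_ginv_sub_pi_general hg
    (skewAdjoint.mem_iff.mpr ((conjTranspose_eq_transpose_of_trivial π).trans hπ))
end

section
/- The matrices I + πg, I − πg, and I − πgπg = (I + πg)(I − πg) are invertible, the matrices g⁻¹ + π and g⁻¹ − π are invertible, and (g⁻¹ + π)⁻¹ = g (I − πg) (I − πgπg)⁻¹ and (g⁻¹ − π)⁻¹ = g (I + πg) (I − πgπg)⁻¹. -/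
/-! A matrix whose Hermitian part is positive definite is injective, hence invertible. If `π` is
skew-Hermitian then so is `gᴴ π g`, hence `gᴴ (1 ± π g)` has the same Hermitian part as `gᴴ`; for
positive definite Hermitian part this makes `1 ± π g`, and with it `g⁻¹ ± π = (1 ± π g) g⁻¹`,
invertible. The formulas rationalize `(1 ± π g)⁻¹` by the commuting factor `1 ∓ π g`. -/

open Matrix

section Formulas

variable {ι R : Type*} [Fintype ι] [DecidableEq ι] [CommRing R] {g π : Matrix ι ι R}

theorem inv_add_eq_one_add_mul_mul_inv (hg : IsUnit g) : g⁻¹ + π = (1 + π * g) * g⁻¹ := by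
  rw [add_mul, one_mul, mul_nonsing_inv_cancel_right _ _ (g.isUnit_iff_isUnit_det.mp hg)]

theorem inv_one_add_eq_one_sub_mul_inv {x : Matrix ι ι R} (hx : IsUnit (1 - x)) :
    (1 + x)⁻¹ = (1 - x) * (1 - x * x)⁻¹ := by
  have factorization : 1 - x * x = (1 + x) * (1 - x) := by noncomm_ring
  rw [factorization, Matrix.mul_inv_rev,
    mul_nonsing_inv_cancel_left _ _ ((1 - x).isUnit_iff_isUnit_det.mp hx)]

theorem inv_inv_add_eq (hg : IsUnit g) (hπg : IsUnit (1 - π * g)) :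
    (g⁻¹ + π)⁻¹ = g * (1 - π * g) * (1 - π * g * π * g)⁻¹ := by
  rw [inv_add_eq_one_add_mul_mul_inv hg, Matrix.mul_inv_rev,
    nonsing_inv_nonsing_inv _ (g.isUnit_iff_isUnit_det.mp hg),
    inv_one_add_eq_one_sub_mul_inv hπg, mul_assoc (π * g), mul_assoc g]

theorem inv_inv_sub_eq (hg : IsUnit g) (hπg : IsUnit (1 + π * g)) :
    (g⁻¹ - π)⁻¹ = g * (1 + π * g) * (1 - π * g * π * g)⁻¹ := by
  simpa only [neg_mul, mul_neg, neg_neg, sub_neg_eq_add, ← sub_eq_add_neg] using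
    inv_inv_add_eq (π := -π) hg (by rwa [neg_mul, sub_neg_eq_add])

end Formulas

section Invertibility

variable {ι 𝕜 : Type*} [Fintype ι] [DecidableEq ι] [Field 𝕜] [PartialOrder 𝕜] [StarRing 𝕜]
  {g π : Matrix ι ι 𝕜}

theorem isUnit_of_posDef_add_conjTranspose_s9 {A : Matrix ι ι 𝕜} (hA : (A + Aᴴ).PosDef) :
    IsUnit A := by
  rw [← mulVec_injective_iff_isUnit]
  refine (injective_iff_map_eq_zero A.mulVecLin).mpr fun x (hx : A *ᵥ x = 0) => ?_
  by_contra x_ne_zero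
  have form_eq_zero : star x ⬝ᵥ ((A + Aᴴ) *ᵥ x) = 0 := by
    rw [add_mulVec, dotProduct_add, dotProduct_mulVec _ Aᴴ, ← star_mulVec, hx, dotProduct_zero,
      star_zero, zero_dotProduct, add_zero]
  exact (hA.dotProduct_mulVec_pos x_ne_zero).ne' form_eq_zero

theorem isUnit_one_add_mul_of_conjTranspose_eq_neg (hg : (g + gᴴ).PosDef) (hπ : πᴴ = -π) :
    IsUnit (1 + π * g) := by
  have same_hermitian_part : gᴴ * (1 + π * g) + (gᴴ * (1 + π * g))ᴴ = g + gᴴ := by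
    simp only [conjTranspose_mul, conjTranspose_add, conjTranspose_one,
      conjTranspose_conjTranspose, hπ]
    noncomm_ring
  exact isUnit_of_mul_isUnit_right
    (isUnit_of_posDef_add_conjTranspose_s9 (same_hermitian_part ▸ hg))

theorem isUnit_inv_add_of_conjTranspose_eq_neg (hg : (g + gᴴ).PosDef) (hπ : πᴴ = -π) :
    IsUnit (g⁻¹ + π) := by
  have hg_unit := isUnit_of_posDef_add_conjTranspose_s9 hg
  rw [inv_add_eq_one_add_mul_mul_inv hg_unit]
  exact (isUnit_one_add_mul_of_conjTranspose_eq_neg hg hπ).mul (isUnit_nonsing_inv_iff.mpr hg_unit)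

theorem inv_ginv_pm_pi_formulas_general (hg : (g + gᴴ).PosDef) (hπ : πᴴ = -π) :
    IsUnit (1 + π * g) ∧ IsUnit (1 - π * g) ∧ IsUnit (1 - π * g * π * g) ∧
      1 - π * g * π * g = (1 + π * g) * (1 - π * g) ∧
      IsUnit (g⁻¹ + π) ∧ IsUnit (g⁻¹ - π) ∧
      (g⁻¹ + π)⁻¹ = g * (1 - π * g) * (1 - π * g * π * g)⁻¹ ∧
      (g⁻¹ - π)⁻¹ = g * (1 + π * g) * (1 - π * g * π * g)⁻¹ := by
  have hg_unit := isUnit_of_posDef_add_conjTranspose_s9 hg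
  have h_neg : (-π)ᴴ = -(-π) := by rw [conjTranspose_neg, hπ]
  have h_add : IsUnit (1 + π * g) := isUnit_one_add_mul_of_conjTranspose_eq_neg hg hπ
  have h_sub : IsUnit (1 - π * g) := by
    simpa only [neg_mul, ← sub_eq_add_neg] using
      isUnit_one_add_mul_of_conjTranspose_eq_neg hg h_neg
  have h_inv_sub : IsUnit (g⁻¹ - π) :=
    sub_eq_add_neg g⁻¹ π ▸ isUnit_inv_add_of_conjTranspose_eq_neg hg h_neg
  have factorization : 1 - π * g * π * g = (1 + π * g) * (1 - π * g) := by noncomm_ring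
  exact ⟨h_add, h_sub, factorization ▸ h_add.mul h_sub, factorization,
    isUnit_inv_add_of_conjTranspose_eq_neg hg hπ, h_inv_sub,
    inv_inv_add_eq hg_unit h_sub, inv_inv_sub_eq hg_unit h_add⟩

end Invertibility

/-- Let `g` be a real symmetric positive-definite `n×n` matrix and `π` a real
antisymmetric `n×n` matrix. Then `I + πg`, `I − πg` and `I − πgπg = (I + πg)(I − πg)`
are invertible, `g⁻¹ + π` and `g⁻¹ − π` are invertible, and
`(g⁻¹ + π)⁻¹ = g (I − πg) (I − πgπg)⁻¹` and `(g⁻¹ − π)⁻¹ = g (I + πg) (I − πgπg)⁻¹`. -/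
theorem inv_ginv_pm_pi_formulas {n : ℕ} (hn : 1 ≤ n)
    (g π : Matrix (Fin n) (Fin n) ℝ)
    (hg : g.PosDef) (hπ : π.transpose = -π) :
    IsUnit (1 + π * g) ∧ IsUnit (1 - π * g) ∧ IsUnit (1 - π * g * π * g) ∧
      (1 - π * g * π * g : Matrix (Fin n) (Fin n) ℝ) = (1 + π * g) * (1 - π * g) ∧
      IsUnit (g⁻¹ + π) ∧ IsUnit (g⁻¹ - π) ∧
      (g⁻¹ + π)⁻¹ = g * (1 - π * g) * (1 - π * g * π * g)⁻¹ ∧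
      (g⁻¹ - π)⁻¹ = g * (1 + π * g) * (1 - π * g * π * g)⁻¹ := by
  exact inv_ginv_pm_pi_formulas_general (by simpa only [hg.isHermitian.eq] using hg.add hg)
    (by rwa [conjTranspose_eq_transpose_of_trivial])
end
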